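/- (Remark after Theorem 2.3, first-order case.) Let Ω ⊂ ℝⁿ be a nonempty bounded open set, let H : L(ℝⁿ, ℝᴺ) → ℝ be continuous with |H| convex, and let φ : ℝⁿ → ℝᴺ be an affine map with (constant) derivative X₀ ∈ L(ℝⁿ, ℝᴺ). If u : ℝⁿ → ℝᴺ is Lipschitz with u = φ on ℝⁿ \ Ω, then essSup_{x ∈ Ω} |H(D u(x))| ≥ (1/|Ω|) ∫_Ω |H(D u(x))| dx ≥ |H(X₀)| = essSup_{x ∈ Ω} |H(D φ(x))|. -/

import Mathlib

/-!
The mean of `Du` over `Ω` is `X₀`: every component `g` of `u - φ` is Lipschitz and vanishes off the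
bounded set `Ω`, so it has compact support and the integral of `Dg` over the whole space is zero
(`LipschitzWith.integral_lineDeriv_mul_eq` with a constant test function). The complement of `Ω`
does not contribute to that integral, since `Dg = 0` almost everywhere on `Ωᶜ`; this is not a purely
topological fact, because the boundary of `Ω` may have positive measure, and it relies on the
Lebesgue density theorem. The lower bound for the mean of `|H(Du)|` is then Jensen's inequality for
the convex function `|H|`. The other claims are elementary: `Du` stays in a closed ball, which is
compact, so `|H(Du)|` is bounded and its essential supremum dominates its mean.
-/

open MeasureTheory

/-- The derivative of a function vanishing on a measurable set is zero almost everywhere on the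
points of differentiability in that set. The density argument is taken from
`ApproximatesLinearOn.norm_fderiv_sub_le`, which concerns self-maps of `E` and is therefore applied
to `x ↦ g x • v`. -/
lemma ae_fderiv_apply_eq_zero {E : Type*} [NormedAddCommGroup E] [NormedSpace ℝ E]
    [FiniteDimensional ℝ E] [MeasurableSpace E] [BorelSpace E] (μ : Measure E)
    [μ.IsAddHaarMeasure] {g : E → ℝ} {S : Set E} (hS : MeasurableSet S)
    (hg : ∀ x ∈ S, g x = 0) (v : E) :
    ∀ᵐ x ∂μ, DifferentiableAt ℝ g x → x ∈ S → fderiv ℝ g x v = 0 := by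
  have hT : MeasurableSet (S ∩ {x | DifferentiableAt ℝ g x}) :=
    hS.inter (measurableSet_of_differentiableAt ℝ g)
  have happ : ApproximatesLinearOn (fun x => g x • v) (0 : E →L[ℝ] E)
      (S ∩ {x | DifferentiableAt ℝ g x}) 0 := by
    intro x hx y hy
    simp [hg x hx.1, hg y hy.1]
  have h := happ.norm_fderiv_sub_le μ hT (fun x => (fderiv ℝ g x).smulRight v)
    (fun x hx => (hx.2.hasFDerivAt.smul_const v).hasFDerivWithinAt)
  rw [ae_restrict_iff' hT] at h
  filter_upwards [h] with x hx hd hxS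
  have h0 : fderiv ℝ g x = 0 ∨ v = 0 := by simpa using hx ⟨hxS, hd⟩
  rcases h0 with h0 | h0 <;> simp [h0]

/-- A Lipschitz function vanishing off a bounded measurable set has mean-zero derivative on it. -/
lemma setIntegral_fderiv_apply_eq_zero {E : Type*} [NormedAddCommGroup E] [NormedSpace ℝ E]
    [FiniteDimensional ℝ E] [MeasurableSpace E] [BorelSpace E] (μ : Measure E)
    [μ.IsAddHaarMeasure] {g : E → ℝ} {Ω : Set E} (hΩ : MeasurableSet Ω)
    (hΩb : Bornology.IsBounded Ω) {C : NNReal} (hL : LipschitzWith C g)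
    (hg : ∀ x ∉ Ω, g x = 0) (v : E) :
    ∫ x in Ω, fderiv ℝ g x v ∂μ = 0 := by
  have hd : ∀ᵐ x ∂μ, DifferentiableAt ℝ g x := hL.ae_differentiableAt
  rw [setIntegral_eq_integral_of_ae_compl_eq_zero]
  · have hcs : HasCompactSupport g :=
      HasCompactSupport.intro (hΩb.isCompact_closure)
        (fun x hx => hg x (fun h => hx (subset_closure h)))
    have h := (LipschitzWith.const (α := E) (1 : ℝ)).integral_lineDeriv_mul_eq
      (μ := μ) hL hcs (-v)
    have hc : ∀ x : E, lineDeriv ℝ (fun _ : E => (1 : ℝ)) x (-v) = 0 := fun x => by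
      simp [lineDeriv]
    simp only [hc, zero_mul, integral_zero, neg_neg, mul_one] at h
    rw [h]
    refine integral_congr_ae ?_
    filter_upwards [hd] with x hx
    exact hx.lineDeriv_eq_fderiv.symm
  · filter_upwards [hd, ae_fderiv_apply_eq_zero μ hΩ.compl hg v] with x hx hx' hxΩ
    exact hx' hx hxΩ



/-- Remark after Theorem 2.3, first-order case: for `Ω ⊂ ℝⁿ` nonempty
bounded open, `H : L(ℝⁿ, ℝᴺ) → ℝ` continuous with `|H|` convex, and `φ` affine with
constant derivative `X₀`, any Lipschitz `u` with `u = φ` off `Ω` satisfies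
`essSup_Ω |H(Du)| ≥ (1/|Ω|) ∫_Ω |H(Du)| ≥ |H(X₀)| = essSup_Ω |H(Dφ)|`. -/
theorem statement11 {n N : ℕ} (Ω : Set (EuclideanSpace ℝ (Fin n)))
    (hΩne : Ω.Nonempty) (hΩo : IsOpen Ω) (hΩb : Bornology.IsBounded Ω)
    (H : (EuclideanSpace ℝ (Fin n) →L[ℝ] EuclideanSpace ℝ (Fin N)) → ℝ)
    (hHc : Continuous H)
    (hHconv : ConvexOn ℝ Set.univ (fun X => |H X|))
    (X₀ : EuclideanSpace ℝ (Fin n) →L[ℝ] EuclideanSpace ℝ (Fin N))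
    (b : EuclideanSpace ℝ (Fin N))
    (u : EuclideanSpace ℝ (Fin n) → EuclideanSpace ℝ (Fin N))
    (K : NNReal) (hu : LipschitzWith K u)
    (hbc : Set.EqOn u (fun x => X₀ x + b) Ωᶜ) :
    ((volume Ω).toReal⁻¹ * ∫ x in Ω, |H (fderiv ℝ u x)|)
        ≤ essSup (fun x => |H (fderiv ℝ u x)|) (volume.restrict Ω) ∧
    |H X₀| ≤ (volume Ω).toReal⁻¹ * ∫ x in Ω, |H (fderiv ℝ u x)| ∧
    |H X₀| = essSup (fun x => |H (fderiv ℝ (fun y => X₀ y + b) x)|)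
        (volume.restrict Ω) := by
  have hpos : 0 < volume Ω := hΩo.measure_pos volume hΩne
  have hfin : volume Ω < ⊤ := hΩb.measure_lt_top
  have : IsFiniteMeasure (volume.restrict Ω) := ⟨by simpa using hfin⟩
  have hne : volume.restrict Ω ≠ 0 := by
    rw [Ne, Measure.restrict_eq_zero]
    exact hpos.ne'
  have hV : 0 < (volume Ω).toReal := ENNReal.toReal_pos hpos.ne' hfin.ne
  have hAc : Continuous fun X => |H X| := hHc.abs
  have hbd : ∀ x, ‖fderiv ℝ u x‖ ≤ K := fun x => norm_fderiv_le_of_lipschitz ℝ hu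
  have hmeas : AEStronglyMeasurable (fderiv ℝ u) (volume.restrict Ω) :=
    (measurable_fderiv ℝ u).aestronglyMeasurable
  have hint : IntegrableOn (fderiv ℝ u) Ω volume :=
    Integrable.of_bound hmeas K (Filter.Eventually.of_forall hbd)
  obtain ⟨M, hM⟩ : ∃ M, ∀ x, |H (fderiv ℝ u x)| ≤ M := by
    obtain ⟨M, hM⟩ := (isCompact_closedBall
      (0 : EuclideanSpace ℝ (Fin n) →L[ℝ] EuclideanSpace ℝ (Fin N)) K).bddAbove_image
        hAc.continuousOn
    exact ⟨M, fun x => hM ⟨_, by simpa using hbd x, rfl⟩⟩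
  have hintH : IntegrableOn (fun x => |H (fderiv ℝ u x)|) Ω volume :=
    Integrable.of_bound (hAc.comp_aestronglyMeasurable hmeas) M
      (Filter.Eventually.of_forall fun x => by simpa using hM x)
  -- Componentwise, `P` is the `i`-th coordinate and `g = P ∘ (u - φ)`.
  have hmean : ∫ x in Ω, fderiv ℝ u x = (volume Ω).toReal • X₀ := by
    ext v i
    let P : EuclideanSpace ℝ (Fin N) →L[ℝ] ℝ := EuclideanSpace.proj i
    let A : EuclideanSpace ℝ (Fin n) →L[ℝ] ℝ := P.comp X₀
    let g : EuclideanSpace ℝ (Fin n) → ℝ := fun x => P (u x) - (A x + P b)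
    have hgL : LipschitzWith (‖P‖₊ * K + ‖A‖₊) g := by
      have h1 := P.lipschitz.comp hu
      have h2 : LipschitzWith ‖A‖₊ (fun x => A x + P b) := by
        simpa using A.lipschitz.add (LipschitzWith.const (P b))
      exact h1.sub h2
    have hg0 : ∀ x ∉ Ω, g x = 0 := fun x hx => by
      have := hbc hx
      simp only at this
      simp [g, A, this]
    have hg := setIntegral_fderiv_apply_eq_zero volume hΩo.measurableSet hΩb hgL hg0 v
    have hcongr : ∀ᵐ x ∂volume.restrict Ω, fderiv ℝ g x v = P (fderiv ℝ u x v) - A v := by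
      filter_upwards [ae_restrict_of_ae hu.ae_differentiableAt] with x hx
      have : HasFDerivAt g (P.comp (fderiv ℝ u x) - A) x :=
        (P.hasFDerivAt.comp x hx.hasFDerivAt).sub (A.hasFDerivAt.add_const (P b))
      rw [this.fderiv]
      rfl
    have hintv : Integrable (fun x => fderiv ℝ u x v) (volume.restrict Ω) :=
      hint.apply_continuousLinearMap v
    rw [integral_congr_ae hcongr, integral_sub (P.integrable_comp hintv) (integrable_const _),
      P.integral_comp_comm hintv, ← ContinuousLinearMap.integral_apply hint] at hg
    simpa [P, A, Measure.real] using sub_eq_zero.1 hg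
  have havg : (volume Ω).toReal⁻¹ * ∫ x in Ω, |H (fderiv ℝ u x)|
      = ⨍ x in Ω, |H (fderiv ℝ u x)| := by
    rw [setAverage_eq, smul_eq_mul, Measure.real]
  refine ⟨?_, ?_, ?_⟩
  · have hle : ∀ᵐ x ∂volume.restrict Ω, |H (fderiv ℝ u x)|
        ≤ essSup (fun x => |H (fderiv ℝ u x)|) (volume.restrict Ω) :=
      ae_le_essSup ⟨M, Filter.eventually_map.2 (Filter.Eventually.of_forall hM)⟩
    rw [inv_mul_le_iff₀ hV]
    calc ∫ x in Ω, |H (fderiv ℝ u x)|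
        ≤ ∫ _x in Ω, essSup (fun x => |H (fderiv ℝ u x)|) (volume.restrict Ω) :=
          integral_mono_ae hintH (integrable_const _) hle
      _ = _ := by simp [Measure.real]
  · have hJ := hHconv.map_set_average_le hAc.continuousOn isClosed_univ hpos.ne' hfin.ne
      (by simp) hint hintH
    rw [setAverage_eq, hmean, Measure.real, smul_smul, inv_mul_cancel₀ hV.ne', one_smul] at hJ
    rw [havg]
    exact hJ
  · have hφ : ∀ x, fderiv ℝ (fun y => X₀ y + b) x = X₀ := fun x =>
      (X₀.hasFDerivAt.add_const b).fderiv
    simp only [hφ]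
    exact (essSup_const _ hne).symm
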